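/- Fix 0 < d ≤ 1. For each n, let A_n be an n×n random matrix with independent identically distributed Ber(d/n) entries. Then the empirical spectral distributions μ_{A_n} converge in probability to the Dirac measure δ_0 at 0 ∈ ℂ; that is, for every bounded continuous function f : ℂ → ℂ and every ε > 0, the probability that |∫ f dμ_{A_n} − f(0)| ≥ ε tends to 0 as n → ∞. -/

import Mathlib

open MeasureTheory

/-- The Bernoulli measure on `ℂ`, putting mass `p` at `1` and mass `1 - p` at `0`. -/
noncomputable def bernoulliC (p : ℝ) : Measure ℂ :=
  ENNReal.ofReal p • Measure.dirac 1 + ENNReal.ofReal (1 - p) • Measure.dirac 0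

/-- The law of an `n × n` matrix with iid `Ber(p)` entries (taking values `0` or `1` in `ℂ`). -/
noncomputable def iidMatrixLaw (n : ℕ) (p : ℝ) : Measure (Fin n → Fin n → ℂ) :=
  Measure.pi fun _ => Measure.pi fun _ => bernoulliC p

/-- The empirical spectral distribution of an `n × n` complex matrix. -/
noncomputable def empiricalSpectralDist {n : ℕ} (M : Matrix (Fin n) (Fin n) ℂ) : Measure ℂ :=
  ((n : ENNReal))⁻¹ • ((M.charpoly.roots).map Measure.dirac).sum

/-- Walk event: starting at `v`, one can make `k` steps along nonzero entries, each step
consuming a row of `S`; visiting a row outside `S` counts as immediate success. -/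
def walkEv {n : ℕ} : ℕ → Finset (Fin n) → Fin n → (Fin n → Fin n → ℂ) → Prop
  | 0, _, _, _ => True
  | k + 1, S, v, A => v ∉ S ∨ ∃ w, A v w ≠ 0 ∧ walkEv k (S.erase v) w A

lemma walkEv_update {n : ℕ} (k : ℕ) (S : Finset (Fin n)) (v u : Fin n) (hu : u ∉ S)
    (A : Fin n → Fin n → ℂ) (y : Fin n → ℂ) :
    walkEv k S v (Function.update A u y) ↔ walkEv k S v A := by
  induction k generalizing S v with
  | zero => simp [walkEv]
  | succ k ih =>
    simp only [walkEv]
    by_cases hv : v ∈ S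
    · have hne : v ≠ u := fun h => hu (h ▸ hv)
      simp only [Function.update_of_ne hne]
      have : ∀ w, walkEv k (S.erase v) w (Function.update A u y) ↔ walkEv k (S.erase v) w A :=
        fun w => ih _ _ (fun h => hu (Finset.mem_of_mem_erase h))
      simp only [this]
    · simp [hv]

lemma walkEv_measurable {n : ℕ} (k : ℕ) (S : Finset (Fin n)) (v : Fin n) :
    MeasurableSet {A : Fin n → Fin n → ℂ | walkEv k S v A} := by
  induction k generalizing S v with
  | zero => simp [walkEv]
  | succ k ih =>
    simp only [walkEv]
    rw [Set.ofPred_or]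
    refine (MeasurableSet.const _).union ?_
    rw [Set.ofPred_exists]
    refine MeasurableSet.iUnion fun w => ?_
    rw [Set.ofPred_and]
    refine MeasurableSet.inter ?_ (ih _ _)
    have : Measurable fun A : Fin n → Fin n → ℂ => A v w := by fun_prop
    exact (this (measurableSet_singleton (0 : ℂ))).compl

lemma walkEv_of_pow {n : ℕ} (A : Fin n → Fin n → ℂ) (k : ℕ) (S : Finset (Fin n)) (v w : Fin n)
    (h : ((Matrix.of A) ^ k) v w ≠ 0) : walkEv k S v A := by
  induction k generalizing S v with
  | zero => simp [walkEv]
  | succ k ih =>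
    right
    rw [pow_succ', Matrix.mul_apply] at h
    obtain ⟨u, -, hu⟩ := Finset.exists_ne_zero_of_sum_ne_zero h
    exact ⟨u, left_ne_zero_of_mul hu, ih _ _ (right_ne_zero_of_mul hu)⟩

open Classical in
/-- Number of good starting vertices. -/
noncomputable def walkCount {n : ℕ} (k : ℕ) (S : Finset (Fin n)) (A : Fin n → Fin n → ℂ) : ℕ :=
  (Finset.univ.filter fun v => walkEv k S v A).card

lemma rank_pow_le {n : ℕ} (A : Fin n → Fin n → ℂ) (k : ℕ) :
    ((Matrix.of A) ^ k).rank ≤ walkCount k Finset.univ A := by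
  classical
  have h : (Matrix.of A) ^ k =
      Matrix.diagonal (fun v => if walkEv k Finset.univ v A then (1 : ℂ) else 0)
        * (Matrix.of A) ^ k := by
    ext v w
    rw [Matrix.diagonal_mul]
    split_ifs with hv
    · simp
    · by_contra h0
      exact hv (walkEv_of_pow A k _ v w (by simpa using h0))
  rw [h]
  refine (Matrix.rank_mul_le_left _ _).trans ?_
  rw [Matrix.rank_diagonal, walkCount, Fintype.card_subtype]
  apply le_of_eq
  congr 1
  ext v
  simp

lemma card_nonzero_roots {n : ℕ} (M : Matrix (Fin n) (Fin n) ℂ) (k : ℕ) :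
    (M.charpoly.roots.filter (fun z => z ≠ 0)).card ≤ (M ^ k).rank := by
  have h1 := LinearMap.finrank_genEigenspace_le (Matrix.toLin' M) 0 k
  rw [Module.End.genEigenspace_nat, show Matrix.toLin' M - (0 : ℂ) • 1 = Matrix.toLin' M by simp,
    Matrix.charpoly_toLin', ← Matrix.toLin'_pow] at h1
  have h2 := LinearMap.finrank_range_add_finrank_ker (Matrix.toLin' (M ^ k))
  have h3 : Module.finrank ℂ (LinearMap.range (Matrix.toLin' (M ^ k))) = (M ^ k).rank := rfl
  have h4 : M.charpoly.roots.card = n := by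
    rw [IsAlgClosed.card_roots_eq_natDegree, Matrix.charpoly_natDegree_eq_dim]; simp
  have h5 := congrArg Multiset.card (Multiset.filter_add_not (fun z : ℂ => z = 0) M.charpoly.roots)
  rw [Multiset.card_add, Multiset.filter_eq', Multiset.card_replicate,
    Polynomial.count_roots, h4] at h5
  simp only [Module.finrank_fintype_fun_eq_card, Fintype.card_fin] at h2
  simp only [ne_eq]
  omega

lemma integral_multiset_dirac (s : Multiset ℂ) (f : BoundedContinuousFunction ℂ ℂ) :
    Integrable f (s.map Measure.dirac).sum ∧
    ∫ z, f z ∂((s.map Measure.dirac).sum) = (s.map f).sum := by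
  induction s using Multiset.induction with
  | empty => simp
  | cons a s ih =>
    have h : Integrable f (Measure.dirac a) := f.integrable _
    simp only [Multiset.map_cons, Multiset.sum_cons]
    refine ⟨h.add_measure ih.1, ?_⟩
    rw [integral_add_measure h ih.1, ih.2, integral_dirac]

lemma norm_sum_sub_le (s : Multiset ℂ) (f : BoundedContinuousFunction ℂ ℂ) :
    ‖(s.map f).sum - s.card * f 0‖ ≤ 2 * ‖f‖ * (s.filter (fun z => z ≠ 0)).card := by
  induction s using Multiset.induction with
  | empty => simp
  | cons a s ih =>
    have h : ((a ::ₘ s).map f).sum - ((a ::ₘ s).card : ℂ) * f 0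
        = (f a - f 0) + ((s.map f).sum - s.card * f 0) := by
      simp; ring
    rw [h]
    refine (norm_add_le _ _).trans ?_
    by_cases ha : a = 0
    · simpa [ha] using ih
    · rw [Multiset.filter_cons_of_pos (p := fun z : ℂ => z ≠ 0) _ ha, Multiset.card_cons]
      have := norm_sub_le (f a) (f 0)
      have := f.norm_coe_le_norm a
      have := f.norm_coe_le_norm 0
      push_cast
      linarith

lemma esd_bound {n : ℕ} (hn : 0 < n) (A : Fin n → Fin n → ℂ) (k : ℕ)
    (f : BoundedContinuousFunction ℂ ℂ) :
    ‖(∫ z, f z ∂(empiricalSpectralDist (Matrix.of A))) - f 0‖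
      ≤ 2 * ‖f‖ * walkCount k Finset.univ A / n := by
  have h4 : (Matrix.of A).charpoly.roots.card = n := by
    rw [IsAlgClosed.card_roots_eq_natDegree, Matrix.charpoly_natDegree_eq_dim]; simp
  have hn' : (n : ℂ) ≠ 0 := by exact_mod_cast hn.ne'
  have hn'' : (0 : ℝ) < n := by exact_mod_cast hn
  rw [empiricalSpectralDist, integral_smul_measure, (integral_multiset_dirac _ f).2]
  have h := norm_sum_sub_le (Matrix.of A).charpoly.roots f
  rw [h4] at h
  have h2 : ((n : ENNReal)⁻¹.toReal) • ((Matrix.of A).charpoly.roots.map f).sum - f 0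
      = (n : ℂ)⁻¹ * (((Matrix.of A).charpoly.roots.map f).sum - n * f 0) := by
    simp only [ENNReal.toReal_inv, ENNReal.toReal_natCast, Complex.real_smul]
    push_cast
    field_simp
  rw [h2, norm_mul, norm_inv, Complex.norm_natCast, inv_mul_eq_div]
  have h5 : (((Matrix.of A).charpoly.roots.filter (fun z => z ≠ 0)).card : ℝ)
      ≤ walkCount k Finset.univ A := by
    exact_mod_cast (card_nonzero_roots _ k).trans (rank_pow_le A k)
  gcongr
  exact h.trans (by gcongr)

lemma bern_prob {p : ℝ} (h0 : 0 ≤ p) (h1 : p ≤ 1) : IsProbabilityMeasure (bernoulliC p) := by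
  constructor
  simp only [bernoulliC, Measure.add_apply, Measure.smul_apply, measure_univ, smul_eq_mul, mul_one]
  rw [← ENNReal.ofReal_add h0 (by linarith)]
  simp

lemma bern_zero (p : ℝ) : bernoulliC p {0} = ENNReal.ofReal (1 - p) := by
  simp [bernoulliC]

lemma scalar_bound {a : ℝ} (ha0 : 0 < a) (ha1 : a ≤ 1) {n N : ℕ} (hn : 2 ≤ n) (hN : N ≤ n)
    {p : ℝ} (hp : p ≤ 1 / n) :
    1 - (1 - p) ^ N ≤ a ^ 2 + 1 / ((n : ℝ) - 1) + (1 - a / 2) / n * N := by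
  have hn' : (2 : ℝ) ≤ n := by exact_mod_cast hn
  have hN' : (N : ℝ) ≤ n := by exact_mod_cast hN
  have hm : (0 : ℝ) < n - 1 := by linarith
  have e1 : Real.exp (-(1 / ((n : ℝ) - 1))) ≤ 1 - 1 / n := by
    rw [Real.exp_neg, inv_le_comm₀ (Real.exp_pos _)]
    · have := Real.add_one_le_exp (1 / ((n : ℝ) - 1))
      refine le_trans (le_of_eq ?_) this
      rw [show (1 : ℝ) - 1 / n = (n - 1) / n by field_simp]
      rw [inv_div]; field_simp; ring
    · rw [sub_pos, div_lt_one (by linarith)]; linarith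
  have e2 : Real.exp (-(N / ((n : ℝ) - 1))) ≤ (1 - p) ^ N := by
    have : Real.exp (-(N / ((n : ℝ) - 1))) = Real.exp (-(1 / ((n : ℝ) - 1))) ^ N := by
      rw [← Real.exp_nat_mul]; congr 1; ring
    rw [this]
    exact pow_le_pow_left₀ (Real.exp_pos _).le (by linarith) N
  have e3 : Real.exp (-a) * (1 + a - N / ((n : ℝ) - 1)) ≤ Real.exp (-(N / ((n : ℝ) - 1))) := by
    have : Real.exp (-(N / ((n : ℝ) - 1)))
        = Real.exp (-a) * Real.exp (a - N / ((n : ℝ) - 1)) := by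
      rw [← Real.exp_add]; congr 1; ring
    rw [this]
    have := Real.add_one_le_exp (a - N / ((n : ℝ) - 1))
    have h0 := Real.exp_pos (-a)
    gcongr
    linarith
  have e4 : 1 - a ≤ Real.exp (-a) := by
    have := Real.add_one_le_exp (-a); linarith
  have e5 : Real.exp (-a) ≤ 1 - a / 2 := by
    rw [Real.exp_neg]
    have := Real.add_one_le_exp a
    rw [inv_le_comm₀ (Real.exp_pos _) (by linarith)]
    refine le_trans ?_ this
    rw [inv_le_iff_one_le_mul₀ (by linarith)]
    nlinarith
  have e6 : (N : ℝ) / (n - 1) ≤ N / n + 1 / (n - 1) := by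
    rw [div_add_div _ _ (by linarith) (by linarith), div_le_div_iff₀ hm (by nlinarith)]
    nlinarith
  have hx : (0 : ℝ) ≤ N / n := by positivity
  have hy : (0 : ℝ) ≤ 1 / ((n : ℝ) - 1) := by positivity
  have hE := Real.exp_pos (-a)
  have e7 : (1 - a / 2) / n * N = (1 - a / 2) * (N / n) := by ring
  rw [e7]
  generalize Real.exp (-a) = E at *
  generalize (N : ℝ) / n = x at *
  generalize (1 : ℝ) / (n - 1) = y at *
  generalize (N : ℝ) / (n - 1) = z at *
  have f1 : E * z ≤ E * (x + y) := mul_le_mul_of_nonneg_left e6 hE.le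
  have f2 : E * x ≤ (1 - a / 2) * x := mul_le_mul_of_nonneg_right e5 hx
  have f3 : E * y ≤ 1 * y := mul_le_mul_of_nonneg_right (by linarith) hy
  have f4 : (1 - a) * (1 + a) ≤ E * (1 + a) := mul_le_mul_of_nonneg_right e4 (by linarith)
  nlinarith

lemma row_bound {a : ℝ} (ha0 : 0 < a) (ha1 : a ≤ 1) {n : ℕ} (hn : 2 ≤ n)
    {p : ℝ} (hp0 : 0 ≤ p) (hp : p ≤ 1 / n) (F : Finset (Fin n)) :
    (Measure.pi fun _ : Fin n => bernoulliC p) {y | ∃ w ∈ F, y w ≠ 0}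
      ≤ ENNReal.ofReal (a ^ 2 + 1 / ((n : ℝ) - 1)) + ENNReal.ofReal ((1 - a / 2) / n) * F.card := by
  classical
  have hn' : (2 : ℝ) ≤ n := by exact_mod_cast hn
  have hp1 : p ≤ 1 := hp.trans (by rw [div_le_one (by linarith)]; linarith)
  have := bern_prob hp0 hp1
  have hset : {y : Fin n → ℂ | ∃ w ∈ F, y w ≠ 0}
      = (Set.univ.pi fun w => if w ∈ F then ({0} : Set ℂ) else Set.univ)ᶜ := by
    ext y
    simp only [Set.mem_ofPred_eq, Set.mem_compl_iff, Set.mem_univ_pi, not_forall]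
    refine exists_congr fun w => ?_
    split_ifs with h <;> simp [h]
  have hmeas : MeasurableSet (Set.univ.pi fun w : Fin n => if w ∈ F then ({0} : Set ℂ) else Set.univ) := by
    refine MeasurableSet.univ_pi fun w => ?_
    split_ifs
    · exact measurableSet_singleton _
    · exact MeasurableSet.univ
  rw [hset, prob_compl_eq_one_sub hmeas, Measure.pi_pi]
  have : ∀ w, bernoulliC p (if w ∈ F then ({0} : Set ℂ) else Set.univ)
      = if w ∈ F then ENNReal.ofReal (1 - p) else 1 := by
    intro w; split_ifs
    · exact bern_zero p
    · exact measure_univ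
  simp only [this]
  rw [Finset.prod_ite_mem, Finset.univ_inter, Finset.prod_const, ← ENNReal.ofReal_pow (by linarith),
    ← ENNReal.ofReal_one, ← ENNReal.ofReal_sub _ (by apply pow_nonneg; linarith),
    ← ENNReal.ofReal_natCast, ← ENNReal.ofReal_mul (by apply div_nonneg <;> linarith),
    ← ENNReal.ofReal_add]
  · exact ENNReal.ofReal_le_ofReal (scalar_bound ha0 ha1 hn (by simpa using F.card_le_univ) hp)
  · have : (0 : ℝ) ≤ 1 / ((n : ℝ) - 1) := by apply div_nonneg <;> linarith
    positivity
  · apply mul_nonneg _ (Nat.cast_nonneg _)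
    apply div_nonneg <;> linarith

/-- recursion for the bound -/
noncomputable def rBound (a e : ℝ) : ℕ → ℝ
  | 0 => 1
  | k + 1 => a ^ 2 + e + (1 - a / 2) * rBound a e k

lemma rBound_nonneg {a e : ℝ} (ha1 : a ≤ 1) (he : 0 ≤ e) (k : ℕ) :
    0 ≤ rBound a e k := by
  induction k with
  | zero => simp [rBound]
  | succ k ih =>
    simp only [rBound]
    have : 0 ≤ (1 - a / 2) * rBound a e k := mul_nonneg (by linarith) ih
    positivity

lemma rBound_le {a e : ℝ} (ha0 : 0 < a) (ha1 : a ≤ 1) (he : 0 ≤ e) (k : ℕ) :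
    rBound a e k ≤ (1 - a / 2) ^ k + (2 * a + 2 * e / a) := by
  induction k with
  | zero =>
    have : 0 ≤ 2 * a + 2 * e / a := by positivity
    simp only [rBound, pow_zero]; linarith
  | succ k ih =>
    simp only [rBound]
    have h := mul_le_mul_of_nonneg_left ih (show 0 ≤ 1 - a / 2 by linarith)
    have h2 : a ^ 2 + e + (1 - a / 2) * (2 * a + 2 * e / a) = 2 * a + 2 * e / a := by
      field_simp; ring
    rw [pow_succ (1 - a / 2) k]
    linarith

lemma walk_prob {a : ℝ} (ha0 : 0 < a) (ha1 : a ≤ 1) {n : ℕ} (hn : 2 ≤ n)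
    {p : ℝ} (hp0 : 0 ≤ p) (hp : p ≤ 1 / n) (K : ℕ) (k : ℕ) (S : Finset (Fin n))
    (hS : Sᶜ.card + k ≤ K) (v : Fin n) (hv : v ∈ S) :
    iidMatrixLaw n p {A | walkEv k S v A}
      ≤ ENNReal.ofReal (rBound a (1 / ((n : ℝ) - 1) + K / n) k) := by
  classical
  have hn' : (2 : ℝ) ≤ n := by exact_mod_cast hn
  have hp1 : p ≤ 1 := hp.trans (by rw [div_le_one (by linarith)]; linarith)
  have := bern_prob hp0 hp1
  have : IsProbabilityMeasure (iidMatrixLaw n p) := by unfold iidMatrixLaw; infer_instance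
  have hm : (0 : ℝ) ≤ 1 / ((n : ℝ) - 1) := by apply div_nonneg <;> linarith
  have he : (0 : ℝ) ≤ 1 / ((n : ℝ) - 1) + K / n := by positivity
  have hb : (0 : ℝ) ≤ (1 - a / 2) / n := by apply div_nonneg <;> linarith
  induction k generalizing S v with
  | zero => simpa [rBound] using prob_le_one
  | succ k ih =>
    have hcard : (S.erase v)ᶜ.card = Sᶜ.card + 1 := by
      rw [Finset.compl_erase, Finset.card_insert_of_notMem (by simpa using hv)]
    set T := S.erase v with hT
    have hvT : v ∉ T := by simp [hT]
    let g : (Fin n → Fin n → ℂ) → ENNReal := fun A =>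
      ENNReal.ofReal (a ^ 2 + 1 / ((n : ℝ) - 1)) + ENNReal.ofReal ((1 - a / 2) / n) *
        ∑ w, {A : Fin n → Fin n → ℂ | walkEv k T w A}.indicator 1 A
    have hgm : Measurable g := by
      have h0 : Measurable fun A : Fin n → Fin n → ℂ =>
          ∑ w, {A : Fin n → Fin n → ℂ | walkEv k T w A}.indicator (1 : (Fin n → Fin n → ℂ) → ENNReal) A :=
        Finset.measurable_sum _ fun w _ => measurable_one.indicator (walkEv_measurable k T w)
      exact (h0.const_mul (ENNReal.ofReal ((1 - a / 2) / n))).const_add _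
    have hstep : iidMatrixLaw n p {A | walkEv (k + 1) S v A} ≤ ∫⁻ A, g A ∂(iidMatrixLaw n p) := by
      rw [← lintegral_indicator_one (walkEv_measurable _ _ _)]
      refine lintegral_le_of_lmarginal_le {v}
        (measurable_one.indicator (walkEv_measurable _ _ _)) hgm ?_
      rw [lmarginal_singleton, lmarginal_singleton]
      intro A
      have hg : ∀ y, g (Function.update A v y) = g A := by
        intro y
        simp only [g, Set.indicator, Set.mem_ofPred_eq, walkEv_update k T _ v hvT, Pi.one_apply]
      simp only [hg, lintegral_const, measure_univ, mul_one]
      let F : Finset (Fin n) := Finset.univ.filter fun w => walkEv k T w A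
      have hF : g A = ENNReal.ofReal (a ^ 2 + 1 / ((n : ℝ) - 1)) +
          ENNReal.ofReal ((1 - a / 2) / n) * F.card := by
        simp only [g, Set.indicator, Set.mem_ofPred_eq, F, Pi.one_apply]
        rw [Finset.sum_boole]
      rw [hF]
      refine le_trans (le_of_eq ?_) (row_bound ha0 ha1 hn hp0 hp F)
      have hmF : MeasurableSet {y : Fin n → ℂ | ∃ w ∈ F, y w ≠ 0} := by
        have : {y : Fin n → ℂ | ∃ w ∈ F, y w ≠ 0} = ⋃ w ∈ F, {y | y w ≠ 0} := by
          ext; simp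
        rw [this]
        refine Finset.measurableSet_biUnion _ fun w _ => ?_
        have hw : Measurable fun y : Fin n → ℂ => y w := measurable_pi_apply w
        exact (hw (measurableSet_singleton (0 : ℂ))).compl
      rw [← lintegral_indicator_one hmF]
      refine lintegral_congr fun y => ?_
      have : walkEv (k + 1) S v (Function.update A v y) ↔ ∃ w ∈ F, y w ≠ 0 := by
        simp only [walkEv, hv, not_true_eq_false, false_or, Function.update_self, ← hT,
          walkEv_update k T _ v hvT, F, Finset.mem_filter, Finset.mem_univ, true_and]
        exact exists_congr fun w => and_comm
      simp only [Set.indicator, Set.mem_ofPred_eq, this, Pi.one_apply]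
    refine hstep.trans ?_
    have hr := rBound_nonneg ha1 he k
    have hsum : ∑ w, iidMatrixLaw n p {A | walkEv k T w A}
        ≤ ENNReal.ofReal (n * rBound a (1 / ((n : ℝ) - 1) + K / n) k + K) := by
      rw [← Finset.sum_add_sum_compl T]
      rw [ENNReal.ofReal_add (by positivity) (by positivity)]
      refine add_le_add ?_ ?_
      · refine (Finset.sum_le_card_nsmul _ _ _ fun w hw => ih T (by omega) w hw).trans ?_
        rw [nsmul_eq_mul, ENNReal.ofReal_mul (by positivity), ENNReal.ofReal_natCast]
        gcongr
        simpa using T.card_le_univ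
      · refine (Finset.sum_le_card_nsmul _ _ 1 fun w hw => prob_le_one).trans ?_
        rw [nsmul_eq_mul, mul_one, ENNReal.ofReal_natCast]
        exact_mod_cast (by omega : Tᶜ.card ≤ K)
    calc ∫⁻ A, g A ∂(iidMatrixLaw n p)
        = ENNReal.ofReal (a ^ 2 + 1 / ((n : ℝ) - 1)) + ENNReal.ofReal ((1 - a / 2) / n) *
          ∑ w, iidMatrixLaw n p {A | walkEv k T w A} := by
          simp only [g]
          rw [lintegral_add_left measurable_const, lintegral_const, measure_univ, mul_one,
            lintegral_const_mul _ (Finset.measurable_sum _ fun w _ =>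
              measurable_one.indicator (walkEv_measurable k T w)),
            lintegral_finsetSum _ fun w _ => measurable_one.indicator (walkEv_measurable k T w)]
          simp only [lintegral_indicator_one (walkEv_measurable k T _)]
      _ ≤ ENNReal.ofReal (a ^ 2 + 1 / ((n : ℝ) - 1)) + ENNReal.ofReal ((1 - a / 2) / n) *
          ENNReal.ofReal (n * rBound a (1 / ((n : ℝ) - 1) + K / n) k + K) := by gcongr
      _ ≤ _ := by
          rw [← ENNReal.ofReal_mul hb, ← ENNReal.ofReal_add (by positivity) (by positivity)]
          apply ENNReal.ofReal_le_ofReal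
          simp only [rBound]
          have hnn : (0 : ℝ) < n := by linarith
          have h1 : (1 - a / 2) / n * (n * rBound a (1 / ((n : ℝ) - 1) + K / n) k + K)
            = (1 - a / 2) * rBound a (1 / ((n : ℝ) - 1) + K / n) k + (1 - a / 2) * (K / n) := by
            field_simp
          have h2 : (1 - a / 2) * ((K : ℝ) / n) ≤ 1 * (K / n) :=
            mul_le_mul_of_nonneg_right (by linarith) (by positivity)
          linarith

lemma bad_prob {a : ℝ} (ha0 : 0 < a) (ha1 : a ≤ 1) {n : ℕ} (hn : 2 ≤ n)
    {p : ℝ} (hp0 : 0 ≤ p) (hp : p ≤ 1 / n) (K : ℕ) (f : BoundedContinuousFunction ℂ ℂ)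
    {ε : ℝ} (hε : 0 < ε) :
    iidMatrixLaw n p {A | ε ≤ ‖(∫ z, f z ∂(empiricalSpectralDist (Matrix.of A))) - f 0‖}
      ≤ ENNReal.ofReal ((2 * ‖f‖ + 1) / ε *
          ((1 - a / 2) ^ K + (2 * a + 2 * (1 / ((n : ℝ) - 1) + K / n) / a))) := by
  classical
  have hn' : (2 : ℝ) ≤ n := by exact_mod_cast hn
  have hnn : (0 : ℝ) < n := by linarith
  have hm : (0 : ℝ) ≤ 1 / ((n : ℝ) - 1) := by apply div_nonneg <;> linarith
  have he : (0 : ℝ) ≤ 1 / ((n : ℝ) - 1) + K / n := by positivity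
  set C := 2 * ‖f‖ + 1 with hC
  have hCpos : 0 < C := by positivity
  let h : (Fin n → Fin n → ℂ) → ENNReal := fun A =>
    ∑ w, {A : Fin n → Fin n → ℂ | walkEv K Finset.univ w A}.indicator 1 A
  have hh : ∀ A, h A = ENNReal.ofReal (walkCount K Finset.univ A) := by
    intro A
    simp only [h, Set.indicator, Set.mem_ofPred_eq, Pi.one_apply]
    rw [Finset.sum_boole, ENNReal.ofReal_natCast, walkCount]
  have hmeas : Measurable h :=
    Finset.measurable_sum _ fun w _ => measurable_one.indicator (walkEv_measurable K _ w)
  set R := (1 - a / 2) ^ K + (2 * a + 2 * (1 / ((n : ℝ) - 1) + K / n) / a) with hR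
  have hint : ∫⁻ A, h A ∂(iidMatrixLaw n p) ≤ ENNReal.ofReal (n * R) := by
    simp only [h]
    rw [lintegral_finsetSum _ fun w _ => measurable_one.indicator (walkEv_measurable K _ w)]
    simp only [lintegral_indicator_one (walkEv_measurable K _ _)]
    refine (Finset.sum_le_card_nsmul _ _ (ENNReal.ofReal R) fun w hw => ?_).trans ?_
    · refine (walk_prob ha0 ha1 hn hp0 hp K K Finset.univ (by simp) w (by simp)).trans ?_
      exact ENNReal.ofReal_le_ofReal (rBound_le ha0 ha1 he K)
    · rw [nsmul_eq_mul, ENNReal.ofReal_mul hnn.le, ENNReal.ofReal_natCast]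
      simp
  have hsub : {A : Fin n → Fin n → ℂ |
      ε ≤ ‖(∫ z, f z ∂(empiricalSpectralDist (Matrix.of A))) - f 0‖}
      ⊆ {A | ENNReal.ofReal (ε * n / C) ≤ h A} := by
    intro A hA
    simp only [Set.mem_ofPred_eq] at hA ⊢
    rw [hh]
    apply ENNReal.ofReal_le_ofReal
    have h1 := hA.trans (esd_bound (by omega) A K f)
    rw [le_div_iff₀ hnn] at h1
    rw [div_le_iff₀ hCpos]
    have : (0 : ℝ) ≤ walkCount K Finset.univ A := Nat.cast_nonneg _
    nlinarith
  refine (measure_mono hsub).trans ?_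
  have hpos : 0 < ε * n / C := by positivity
  refine (meas_ge_le_lintegral_div hmeas.aemeasurable (by simpa using hpos) (by simp)).trans ?_
  refine (ENNReal.div_le_div_right hint _).trans ?_
  rw [← ENNReal.ofReal_div_of_pos hpos]
  apply le_of_eq
  congr 1
  field_simp

theorem subcritical_spectral_law_dirac (d : ℝ) (hd0 : 0 < d) (hd1 : d ≤ 1) :
    ∀ f : BoundedContinuousFunction ℂ ℂ, ∀ ε : ℝ, 0 < ε →
      Filter.Tendsto
        (fun n : ℕ =>
          iidMatrixLaw n (d / n)
            {A | ε ≤ ‖(∫ z, f z ∂(empiricalSpectralDist (Matrix.of A))) - f 0‖})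
        Filter.atTop (nhds 0) := by
  intro f ε hε
  rw [ENNReal.tendsto_nhds_zero]
  intro δ hδ
  obtain ⟨η, hη0, hηδ⟩ : ∃ η : ℝ, 0 < η ∧ ENNReal.ofReal η ≤ δ := by
    obtain ⟨r, hr0, hr⟩ := ENNReal.lt_iff_exists_nnreal_btwn.mp hδ
    exact ⟨r, by exact_mod_cast hr0, by simpa using hr.le⟩
  set C := (2 * ‖f‖ + 1) / ε with hC
  have hCpos : 0 < C := by positivity
  obtain ⟨a, ha0, ha1, ha⟩ : ∃ a : ℝ, 0 < a ∧ a ≤ 1 ∧ C * (2 * a) ≤ η / 3 := by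
    refine ⟨min 1 (η / (6 * C)), by positivity, min_le_left _ _, ?_⟩
    calc C * (2 * min 1 (η / (6 * C))) ≤ C * (2 * (η / (6 * C))) := by
          gcongr; exact min_le_right _ _
      _ = η / 3 := by field_simp; ring
  obtain ⟨K, hK⟩ := exists_pow_lt_of_lt_one (show 0 < η / (3 * C) by positivity)
    (show 1 - a / 2 < 1 by linarith)
  have hK' : C * (1 - a / 2) ^ K ≤ η / 3 := by
    calc C * (1 - a / 2) ^ K ≤ C * (η / (3 * C)) := by gcongr
      _ = η / 3 := by field_simp
  have hlim : Filter.Tendsto (fun n : ℕ => C * (2 * (1 / ((n : ℝ) - 1) + K / n) / a))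
      Filter.atTop (nhds 0) := by
    have t0 : Filter.Tendsto (fun n : ℕ => (n : ℝ)) Filter.atTop Filter.atTop :=
      tendsto_natCast_atTop_atTop
    have t1 : Filter.Tendsto (fun n : ℕ => 1 / ((n : ℝ) - 1)) Filter.atTop (nhds 0) :=
      (Filter.tendsto_atTop_add_const_right _ (-1) t0).const_div_atTop 1
    have t2 : Filter.Tendsto (fun n : ℕ => (K : ℝ) / n) Filter.atTop (nhds 0) :=
      t0.const_div_atTop _
    have := ((((t1.add t2).const_mul 2).div_const a).const_mul C)
    simpa using this
  filter_upwards [hlim.eventually (ge_mem_nhds (show (0 : ℝ) < η / 3 by positivity)),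
    Filter.eventually_ge_atTop 2] with n hn1 hn
  have hn' : (2 : ℝ) ≤ n := by exact_mod_cast hn
  refine (bad_prob ha0 ha1 hn (p := d / n) (by positivity) (by gcongr) K f hε).trans ?_
  refine le_trans (ENNReal.ofReal_le_ofReal ?_) hηδ
  rw [← hC]
  linarith
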